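/- arXiv:1602.00027 — 4 statements merged into one kernel-verified Lean document; each statement's English description precedes it below -/
import Mathlib

section
/- Let V be a finite set and A a symmetric V×V matrix over the two-element field F₂. Then the nondegeneracy set system N(A) = (V; {U ⊆ V : the principal submatrix A_U is invertible over F₂}) is a delta-matroid, i.e., it is a proper set system satisfying the Symmetric Exchange Axiom. (This is Bouchet's theorem; the adjacency matrix of any framed graph is such a matrix A.) -/
open scoped symmDiff

variable {α : Type*} [DecidableEq α]

/-- A (proper) delta-matroid: a nonempty collection `Φ` of subsets of the ground set `E`
satisfying the Symmetric Exchange Axiom. -/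
def IsDeltaMatroid (E : Finset α) (Φ : Set (Finset α)) : Prop :=
  Φ.Nonempty ∧ (∀ φ ∈ Φ, φ ⊆ E) ∧
    ∀ φ₁ ∈ Φ, ∀ φ₂ ∈ Φ, ∀ e ∈ φ₁ ∆ φ₂, ∃ e' ∈ φ₁ ∆ φ₂, φ₁ ∆ ({e, e'} : Finset α) ∈ Φ

/-- The principal submatrix of `A` with rows and columns indexed by `U`. -/
def principalSubmatrix (A : Matrix α α (ZMod 2)) (U : Finset α) :
    Matrix U U (ZMod 2) :=
  A.submatrix (fun i => (i : α)) (fun i => (i : α))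

/-- `U` is nondegenerate for `A`: the principal submatrix `A_U` is invertible over `F₂`
(the empty submatrix has determinant `1`, hence is invertible by convention). -/
def Nondeg (A : Matrix α α (ZMod 2)) (U : Finset α) : Prop :=
  IsUnit (principalSubmatrix A U).det

/-- Twist of a collection of feasible sets by a subset `T`:
`Φ * T = {φ ∆ T : φ ∈ Φ}`. -/
def twist (Φ : Set (Finset α)) (T : Finset α) : Set (Finset α) :=
  {ψ | ∃ φ ∈ Φ, ψ = φ ∆ T}

/-- A binary delta-matroid on ground set `E`: a twist of the nondegeneracy set system of a
symmetric matrix over `F₂` (the matrix is indexed by the ambient type; only its `E × E`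
block is ever used, since only principal submatrices `A_U` with `U ⊆ E` occur). -/
def IsBinaryDeltaMatroid (E : Finset α) (Φ : Set (Finset α)) : Prop :=
  ∃ (A : Matrix α α (ZMod 2)) (T : Finset α), A.IsSymm ∧ T ⊆ E ∧
    Φ = {ψ | ∃ U : Finset α, U ⊆ E ∧ Nondeg A U ∧ ψ = U ∆ T}

/-- Feasible sets of the deletion `D ∖ e`. -/
def delSet (Φ : Set (Finset α)) (e : α) : Set (Finset α) :=
  {φ ∈ Φ | e ∉ φ}

/-- Feasible sets of the contraction `D / e`. -/
def conSet (Φ : Set (Finset α)) (e : α) : Set (Finset α) :=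
  {ψ | ∃ φ ∈ Φ, e ∈ φ ∧ ψ = φ.erase e}

/-- Feasible sets of the handle slide (second Vassiliev move) of `a` over `b`:
`Φ ∆ {φ ∪ {a} : φ ⊆ E ∖ {a, b}, φ ∪ {b} ∈ Φ}`. -/
def slideSet (E : Finset α) (Φ : Set (Finset α)) (a b : α) : Set (Finset α) :=
  Φ ∆ {ψ | ∃ φ : Finset α, φ ⊆ E \ {a, b} ∧ φ ∪ {b} ∈ Φ ∧ ψ = φ ∪ {a}}

/-- Feasible sets of the first Vassiliev move (exchange of handle ends):
`D\'_{ab} = ((D * {b})~_{ab}) * {b}`. -/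
def firstMove (E : Finset α) (Φ : Set (Finset α)) (a b : α) : Set (Finset α) :=
  twist (slideSet E (twist Φ {b}) a b) {b}

/-!
Replacing the rows of the identity matrix indexed by `U` by those of `A` gives a matrix `M_U` with
`det M_U = det A_U`. When `A_U` is invertible, the principal pivot transform `B = M_{Uᶜ} * M_U⁻¹`
satisfies Tucker's identity `det A_{U ∆ S} = det B_S * det A_U`, so `U ∆ S` is nondegenerate for `A`
exactly when `S` is nondegenerate for `B`. This reduces the exchange axiom to `φ₁ = ∅`: if `det B_W`
is nonzero and `e ∈ W`, then row `e` of `B_W` has a nonzero entry `B e e'`, and either `{e}` or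
`{e, e'}` is nondegenerate. The case `{e, e'}` needs `B e' e ≠ 0` as well, which holds because
scaling the rows of `B` by units makes it symmetric or skew-symmetric, like `A`.
-/

section PrincipalPivot

open scoped Matrix

variable {V R : Type*} [DecidableEq V] [CommRing R]

/-- The principal minor of `A` indexed by `U`; for `R = ZMod 2`, the statement
`IsUnit (principalMinor A U)` is definitionally `Nondeg A U`. -/
def principalMinor (A : Matrix V V R) (U : Finset V) : R :=
  (A.submatrix (fun i : U => (i : V)) (fun i : U => (i : V))).det

theorem principalMinor_empty (A : Matrix V V R) : principalMinor A ∅ = 1 :=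
  Matrix.det_isEmpty

theorem principalMinor_singleton (A : Matrix V V R) (i : V) : principalMinor A {i} = A i i :=
  Matrix.det_unique _

theorem principalMinor_pair (A : Matrix V V R) {i j : V} (hij : i ≠ j) :
    principalMinor A {i, j} = A i i * A j j - A i j * A j i := by
  let f : Fin 2 → ({i, j} : Finset V) := ![⟨i, by simp⟩, ⟨j, by simp⟩]
  have hf : Function.Bijective f := by
    refine (Fintype.bijective_iff_surjective_and_card f).mpr ⟨?_, by simp [hij]⟩
    rintro ⟨k, hk⟩
    obtain rfl | rfl : k = i ∨ k = j := by simpa using hk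
    exacts [⟨0, rfl⟩, ⟨1, rfl⟩]
  rw [principalMinor, ← Matrix.det_submatrix_equiv_self (Equiv.ofBijective f hf),
    Matrix.det_fin_two]
  rfl

theorem exists_apply_ne_zero_of_principalMinor_ne_zero {A : Matrix V V R} {U : Finset V}
    (hU : principalMinor A U ≠ 0) {i : V} (hi : i ∈ U) : ∃ j ∈ U, A i j ≠ 0 := by
  contrapose! hU
  exact Matrix.det_eq_zero_of_row_eq_zero ⟨i, hi⟩ fun j => hU j j.2

theorem exists_principalMinor_pair_ne_zero [NoZeroDivisors R] {A : Matrix V V R}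
    (hA : ∀ i j, A i j = 0 → A j i = 0) {U : Finset V} (hU : principalMinor A U ≠ 0) {i : V}
    (hi : i ∈ U) : ∃ j ∈ U, principalMinor A {i, j} ≠ 0 := by
  by_cases hii : A i i = 0
  · obtain ⟨j, hj, hij⟩ := exists_apply_ne_zero_of_principalMinor_ne_zero hU hi
    have hne : i ≠ j := by
      rintro rfl
      exact hij hii
    refine ⟨j, hj, ?_⟩
    rw [principalMinor_pair A hne, hii, zero_mul, zero_sub, neg_ne_zero]
    exact mul_ne_zero hij fun hji => hij (hA j i hji)
  · refine ⟨i, hi, ?_⟩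
    rwa [Finset.pair_eq_singleton, principalMinor_singleton]

/-- The matrix `M_U` whose rows in `U` are those of `A` and whose other rows are those of the
identity. It extends `A_U` to a `V × V` matrix with the same determinant. -/
def rowMix (A : Matrix V V R) (U : Finset V) : Matrix V V R :=
  Matrix.of (U.piecewise A.row (1 : Matrix V V R).row)

theorem rowMix_apply (A : Matrix V V R) (U : Finset V) (i : V) :
    rowMix A U i = if i ∈ U then A i else (1 : Matrix V V R) i :=
  rfl

/-- The row scaling, `-ε⁻¹` on `U` and `1` elsewhere, which turns the principal pivot transform at
`U` of a matrix `A` with `Aᵀ = ε • A` into a matrix of the same kind. -/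
def pivotScaling (ε : Rˣ) (U : Finset V) (i : V) : Rˣ :=
  if i ∈ U then -ε⁻¹ else 1

variable [Fintype V]

theorem det_rowMix (A : Matrix V V R) (U : Finset V) : (rowMix A U).det = principalMinor A U :=
  Matrix.det_piecewise_one_eq_submatrix_det A U

/-- The principal pivot transform of `A` at `U`, which exchanges the coordinates `x i` and `(A x) i`
for `i ∈ U` on the graph of `A`. It is meaningful only when `principalMinor A U` is a unit:
otherwise the inverse is the junk value `0`. -/
noncomputable def principalPivot (A : Matrix V V R) (U : Finset V) : Matrix V V R :=
  rowMix A Uᶜ * (rowMix A U)⁻¹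

theorem rowMix_symmDiff {A : Matrix V V R} {U : Finset V} (hU : IsUnit (principalMinor A U))
    (S : Finset V) : rowMix A (U ∆ S) = rowMix (principalPivot A U) S * rowMix A U := by
  have pivot_mul : principalPivot A U * rowMix A U = rowMix A Uᶜ :=
    Matrix.nonsing_inv_mul_cancel_right _ _ (det_rowMix A U ▸ hU)
  funext i
  rw [Matrix.mul_apply_eq_vecMul, rowMix_apply _ S]
  by_cases hiS : i ∈ S
  · rw [if_pos hiS, ← Matrix.mul_apply_eq_vecMul, pivot_mul]
    simp [rowMix_apply, Finset.mem_symmDiff, hiS]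
  · rw [if_neg hiS, ← Matrix.mul_apply_eq_vecMul, one_mul]
    simp [rowMix_apply, Finset.mem_symmDiff, hiS]

theorem principalMinor_symmDiff {A : Matrix V V R} {U : Finset V}
    (hU : IsUnit (principalMinor A U)) (S : Finset V) :
    principalMinor A (U ∆ S) = principalMinor (principalPivot A U) S * principalMinor A U := by
  rw [← det_rowMix, rowMix_symmDiff hU, Matrix.det_mul, det_rowMix, det_rowMix]

theorem transpose_rowMix_mul_rowMix_compl {A : Matrix V V R} {ε : Rˣ} (hA : Aᵀ = ε • A)
    (U : Finset V) :
    (rowMix A U)ᵀ * (Matrix.diagonal (fun i => (pivotScaling ε U i : R)) * rowMix A Uᶜ) =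
      Matrix.of fun i j => (1 - (if i ∈ U then 1 else 0) - (if j ∈ U then 1 else 0)) * A i j := by
  ext i j
  have summand (k : V) : rowMix A U k i * (pivotScaling ε U k * rowMix A Uᶜ k j) =
      (if k = i then (1 - if k ∈ U then 1 else 0) * A k j else 0) -
        (if k = j then (if k ∈ U then 1 else 0) * A i k else 0) := by
    by_cases hk : k ∈ U
    · have hki : (ε⁻¹ : Rˣ) * A k i = A i k := by
        rw [show A k i = ε * A i k from congr_fun₂ hA i k, Units.inv_mul_cancel_left]
      obtain rfl | hkj := eq_or_ne k j
      · simp [rowMix_apply, pivotScaling, hk, ← hki, mul_comm]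
      · simp [rowMix_apply, pivotScaling, hk, hkj]
    · simp [rowMix_apply, pivotScaling, Matrix.one_apply, hk]
  rw [Matrix.mul_apply]
  simp only [Matrix.transpose_apply, Matrix.diagonal_mul, Matrix.of_apply, summand,
    Finset.sum_sub_distrib, Finset.sum_ite_eq', Finset.mem_univ, if_true, sub_mul]

theorem transpose_diagonal_mul_principalPivot {A : Matrix V V R} {ε : Rˣ} (hA : Aᵀ = ε • A)
    {U : Finset V} (hU : IsUnit (principalMinor A U)) :
    (Matrix.diagonal (fun i => (pivotScaling ε U i : R)) * principalPivot A U)ᵀ =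
      ε • (Matrix.diagonal (fun i => (pivotScaling ε U i : R)) * principalPivot A U) := by
  set M := rowMix A U
  set D := Matrix.diagonal fun i => (pivotScaling ε U i : R)
  set N := Mᵀ * (D * rowMix A Uᶜ) with hN
  have hM : IsUnit Mᵀ.det := by rwa [Matrix.det_transpose, det_rowMix]
  have congruence : D * principalPivot A U = M⁻¹ᵀ * N * M⁻¹ := by
    rw [hN, Matrix.transpose_nonsing_inv, Matrix.nonsing_inv_mul_cancel_left _ _ hM,
      principalPivot, Matrix.mul_assoc]
  have transpose_N : Nᵀ = ε • N := by
    rw [hN, transpose_rowMix_mul_rowMix_compl hA]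
    ext i j
    have hji : A j i = ε * A i j := congr_fun₂ hA i j
    simp only [Matrix.transpose_apply, Matrix.smul_apply, Matrix.of_apply, hji, Units.smul_def,
      smul_eq_mul]
    ring
  calc (D * principalPivot A U)ᵀ = M⁻¹ᵀ * Nᵀ * M⁻¹ := by
        rw [congruence, Matrix.transpose_mul, Matrix.transpose_mul, Matrix.transpose_transpose,
          Matrix.mul_assoc]
    _ = ε • (D * principalPivot A U) := by
        rw [transpose_N, Matrix.mul_smul, Matrix.smul_mul, congruence]

theorem principalPivot_apply_eq_zero_symm {A : Matrix V V R} {ε : Rˣ} (hA : Aᵀ = ε • A)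
    {U : Finset V} (hU : IsUnit (principalMinor A U)) {i j : V}
    (hij : principalPivot A U i j = 0) : principalPivot A U j i = 0 := by
  have h := congr_fun₂ (transpose_diagonal_mul_principalPivot hA hU) i j
  simpa [Matrix.diagonal_mul, Units.smul_def, hij] using h

end PrincipalPivot

theorem exists_isUnit_principalMinor_symmDiff_pair {V K : Type*} [Finite V] [DecidableEq V]
    [Field K] {A : Matrix V V K} {ε : Kˣ} (hA : A.transpose = ε • A) {U W : Finset V}
    (hU : IsUnit (principalMinor A U)) (hW : IsUnit (principalMinor A W)) {e : V}
    (he : e ∈ U ∆ W) : ∃ e' ∈ U ∆ W, IsUnit (principalMinor A (U ∆ {e, e'})) := by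
  cases nonempty_fintype V
  have hpivot : principalMinor (principalPivot A U) (U ∆ W) ≠ 0 := by
    rw [← symmDiff_symmDiff_cancel_left U W, principalMinor_symmDiff hU] at hW
    exact left_ne_zero_of_mul hW.ne_zero
  obtain ⟨e', he', hpair⟩ := exists_principalMinor_pair_ne_zero
    (fun _ _ => principalPivot_apply_eq_zero_symm hA hU) hpivot he
  refine ⟨e', he', ?_⟩
  rw [principalMinor_symmDiff hU]
  exact hpair.isUnit.mul hU

theorem nondegeneracy_isDeltaMatroid_general {V K : Type*} [Fintype V] [DecidableEq V] [Field K]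
    (A : Matrix V V K) (hA : A.IsSymm ∨ A.transpose = -A) :
    IsDeltaMatroid (Finset.univ : Finset V) {U : Finset V | IsUnit (principalMinor A U)} := by
  obtain ⟨ε, hε⟩ : ∃ ε : Kˣ, A.transpose = ε • A := by
    rcases hA with hsymm | hskew
    · exact ⟨1, by rw [one_smul, hsymm.eq]⟩
    · exact ⟨-1, by rw [hskew, Units.neg_smul, one_smul]⟩
  have isUnit_empty : IsUnit (principalMinor A ∅) := principalMinor_empty A ▸ isUnit_one
  exact ⟨⟨∅, isUnit_empty⟩, fun _ _ => Finset.subset_univ _,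
    fun _ hU _ hW _ he => exists_isUnit_principalMinor_symmDiff_pair hε hU hW he⟩

/-- Bouchet. For a symmetric matrix `A` over `F₂` indexed by a finite
set `V`, the nondegeneracy set system `N(A) = (V; {U ⊆ V : A_U invertible})` is a
(proper) delta-matroid. -/
theorem nondegeneracy_isDeltaMatroid {V : Type*} [Fintype V] [DecidableEq V]
    (A : Matrix V V (ZMod 2)) (hA : A.IsSymm) :
    IsDeltaMatroid (Finset.univ : Finset V) {U : Finset V | Nondeg A U} :=
  nondegeneracy_isDeltaMatroid_general A (Or.inl hA)
end

section
/- Let D = (E; Φ) be a binary delta-matroid and a, b ∈ E two distinct elements. Then the first Vassiliev move D'_{ab} = ((D * {b})̃_{ab}) * {b} is a binary delta-matroid. -/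
open scoped symmDiff

variable {α : Type*} [DecidableEq α]

/-!
A binary delta-matroid is given by two `E × E` matrices `M`, `N` over `F₂` with `MᵀN` symmetric, so
that the columns of `M` stacked over `N` span an isotropic subspace of `F₂^E ⊕ F₂^E`: a set `U` is
feasible when taking the rows in `U` from `M` and the others from `N` gives an invertible matrix.
Twisting by `T` swaps the rows in `T` of `M` and `N`, and a change of basis of the subspace
multiplies both matrices on the right.

The first Vassiliev move is the symplectic shear `M ↦ M + (E_ab + E_ba) N`. When `a, b ∈ U`, the
determinant attached to `U` expands, multilinearly in the rows `a` and `b`, into four terms: two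
are the determinants attached to `U` and `U \ {a, b}`, and the other two have the rows
`(M a, N a)` and `(N b, M b)`; they cancel, because the subspace is isotropic.
-/

open scoped Matrix

section MixRows

variable {m n R : Type*}

/-- The matrix whose `i`-th row is that of `M` if `p i`, and that of `N` otherwise. If the columns
of `M` stacked over `N` span a subspace of `Rᵐ ⊕ Rᵐ`, this is the projection of that subspace to a
coordinate half. -/
def mixRows (p : m → Prop) [DecidablePred p] (M N : Matrix m n R) : Matrix m n R :=
  Matrix.of fun i => if p i then M i else N i

theorem mixRows_of_pos {p : m → Prop} [DecidablePred p] {i : m} (hi : p i) (M N : Matrix m n R) :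
    mixRows p M N i = M i :=
  if_pos hi

theorem mixRows_of_neg {p : m → Prop} [DecidablePred p] {i : m} (hi : ¬p i) (M N : Matrix m n R) :
    mixRows p M N i = N i :=
  if_neg hi

theorem mixRows_mixRows {p q r : m → Prop} [DecidablePred p] [DecidablePred q] [DecidablePred r]
    (h : ∀ i, r i ↔ Xor (p i) (q i)) (M N : Matrix m n R) :
    mixRows p (mixRows q N M) (mixRows q M N) = mixRows r M N := by
  ext i j
  by_cases hp : p i <;> by_cases hq : q i <;> simp [mixRows, h, hp, hq]

theorem mixRows_mul [Fintype n] {l : Type*} [NonUnitalNonAssocSemiring R] (p : m → Prop)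
    [DecidablePred p] (M N : Matrix m n R) (P : Matrix n l R) :
    mixRows p (M * P) (N * P) = mixRows p M N * P := by
  ext i j
  by_cases hi : p i <;> simp [mixRows, Matrix.mul_apply, hi]

theorem det_mixRows_one [Fintype m] [DecidableEq m] [CommRing R] (p : m → Prop) [DecidablePred p]
    (A : Matrix m m R) : (mixRows p A 1).det = (A.toSquareBlockProp p).det := by
  rw [Matrix.twoBlockTriangular_det _ p]
  · have hpos : (mixRows p A 1).toSquareBlockProp p = A.toSquareBlockProp p := by
      ext i j
      exact congrFun (mixRows_of_pos i.2 A 1) j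
    have hneg : (mixRows p A 1).toSquareBlockProp (fun i => ¬p i) = 1 := by
      ext i j
      simp [Matrix.toSquareBlockProp, mixRows_of_neg i.2, Matrix.one_apply, Subtype.ext_iff]
    rw [hpos, hneg, Matrix.det_one, mul_one]
  · intro i hi j hj
    have hij : i ≠ j := fun h => hi (h ▸ hj)
    rw [mixRows_of_neg hi, Matrix.one_apply_ne hij]

end MixRows

section Isotropic

variable {m n R : Type*} [Fintype m]

theorem isSymm_mixRows_transpose_mul [CommRing R] [CharP R 2] {M N : Matrix m n R}
    (h : (Mᵀ * N).IsSymm) (p : m → Prop) [DecidablePred p] :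
    ((mixRows p N M)ᵀ * mixRows p M N).IsSymm := by
  refine Matrix.IsSymm.ext fun k l => CharTwo.add_eq_zero.1 ?_
  rw [← CharTwo.add_eq_zero.2 (h.apply k l)]
  simp only [Matrix.mul_apply, Matrix.transpose_apply, ← Finset.sum_add_distrib]
  refine Finset.sum_congr rfl fun i _ => ?_
  by_cases hi : p i
  · simp only [mixRows_of_pos hi]
    ring
  · simp only [mixRows_of_neg hi]

variable [CommSemiring R] {M N : Matrix m n R}

theorem isSymm_mul_transpose_mul_mul [Fintype n] {l : Type*} (h : (Mᵀ * N).IsSymm)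
    (P : Matrix n l R) : ((M * P)ᵀ * (N * P)).IsSymm := by
  have hMN : Nᵀ * M = Mᵀ * N := by simpa using h.eq
  simp only [Matrix.IsSymm, Matrix.transpose_mul, Matrix.transpose_transpose, Matrix.mul_assoc]
  rw [← Matrix.mul_assoc Nᵀ, hMN, Matrix.mul_assoc]

theorem isSymm_add_mul_transpose_mul (h : (Mᵀ * N).IsSymm) {S : Matrix m m R} (hS : S.IsSymm) :
    ((M + S * N)ᵀ * N).IsSymm := by
  have hS' : (Nᵀ * (S * N)).IsSymm := by
    simp [Matrix.IsSymm, Matrix.transpose_mul, hS.eq, Matrix.mul_assoc]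
  simpa [Matrix.transpose_mul, hS.eq, Matrix.add_mul, Matrix.mul_assoc] using h.add hS'

end Isotropic

section Alternating

variable {n R : Type*} [CommRing R]

theorem sum_sum_smul_isAlt_eq_zero [Fintype n] {V W : Type*} [AddCommGroup V] [AddCommGroup W]
    [Module R V] [Module R W] {S : Matrix n n R} (hS : S.IsSymm) {B : V →ₗ[R] V →ₗ[R] W}
    (hB : B.IsAlt) (v : n → V) : ∑ k, ∑ l, S k l • B (v k) (v l) = 0 := by
  classical
  rw [← Finset.sum_product']
  refine Finset.sum_involution (fun q _ => q.swap) ?_ ?_ (by simp) (by simp)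
  · rintro ⟨k, l⟩ -
    simp [hS.apply k l, ← hB.neg (v k) (v l)]
  · rintro ⟨k, l⟩ - hne hswap
    obtain rfl : l = k := congrArg Prod.fst hswap
    exact hne (by simp [hB.self_eq_zero])

/-- When `MᵀN` is symmetric, so is the tensor `∑ j, M j ⊗ N j`; alternating forms annihilate it. -/
theorem sum_isAlt_rows_eq_zero [Finite n] {m W : Type*} [Fintype m] [AddCommGroup W]
    [Module R W] {M N : Matrix m n R} (h : (Mᵀ * N).IsSymm) {B : (n → R) →ₗ[R] (n → R) →ₗ[R] W}
    (hB : B.IsAlt) : ∑ j, B (M j) (N j) = 0 := by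
  classical
  cases nonempty_fintype n
  have expand (j : m) : B (M j) (N j) =
      ∑ k, ∑ l, (M j k * N j l) • B (Pi.single k 1) (Pi.single l 1) := by
    conv_lhs => rw [pi_eq_sum_univ' (M j), pi_eq_sum_univ' (N j)]
    simp only [map_sum, map_smul, LinearMap.sum_apply, LinearMap.smul_apply, Finset.smul_sum,
      ← smul_assoc, smul_eq_mul]
    rw [Finset.sum_comm]
    simp only [mul_comm]
  rw [← sum_sum_smul_isAlt_eq_zero h hB fun k => Pi.single k 1]
  simp only [expand, Matrix.mul_apply, Matrix.transpose_apply, Finset.sum_smul]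
  rw [Finset.sum_comm]
  exact Finset.sum_congr rfl fun k _ => Finset.sum_comm

variable [Fintype n] [DecidableEq n] {a b : n} (hab : a ≠ b)

/-- The determinant of `K` as a bilinear form in its rows `a` and `b`. -/
def detRowPair (K : Matrix n n R) : (n → R) →ₗ[R] (n → R) →ₗ[R] R :=
  LinearMap.mk₂ R (fun u v => ((K.updateRow a u).updateRow b v).det)
    (fun u₁ u₂ v => by simp only [Matrix.updateRow_comm _ hab, Matrix.det_updateRow_add])
    (fun c u v => by
      simp only [Matrix.updateRow_comm _ hab, Matrix.det_updateRow_smul, smul_eq_mul])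
    (fun _ _ _ => Matrix.det_updateRow_add _ _ _ _)
    (fun _ _ _ => Matrix.det_updateRow_smul _ _ _ _)

theorem detRowPair_isAlt (K : Matrix n n R) : (detRowPair hab K).IsAlt := fun u =>
  Matrix.det_zero_of_row_eq hab (by simp [Matrix.updateRow_ne hab])

theorem detRowPair_eq_det {K K' : Matrix n n R} (h : ∀ i, i ≠ a → i ≠ b → K' i = K i) :
    detRowPair hab K (K' a) (K' b) = K'.det := by
  suffices hK' : (K.updateRow a (K' a)).updateRow b (K' b) = K' from congrArg Matrix.det hK'
  ext i j
  rcases eq_or_ne i b with rfl | hib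
  · simp
  rcases eq_or_ne i a with rfl | hia
  · simp [Matrix.updateRow_ne hab]
  · simp [Matrix.updateRow_ne, hia, hib, h i hia hib]

theorem detRowPair_row_left (K : Matrix n n R) {j : n} (hja : j ≠ a) (hjb : j ≠ b) (v : n → R) :
    detRowPair hab K (K j) v = 0 :=
  Matrix.det_zero_of_row_eq hja (by simp [Matrix.updateRow_ne, hab, hja, hjb])

theorem detRowPair_row_right (K : Matrix n n R) {j : n} (hja : j ≠ a) (hjb : j ≠ b) (u : n → R) :
    detRowPair hab K u (K j) = 0 :=
  Matrix.det_zero_of_row_eq hjb (by simp [Matrix.updateRow_ne, hja, hjb])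

theorem detRowPair_mixRows_add_eq_zero {M N : Matrix n n R} (h : (Mᵀ * N).IsSymm) (p : n → Prop)
    [DecidablePred p] :
    detRowPair hab (mixRows p M N) (M a) (N a) + detRowPair hab (mixRows p M N) (M b) (N b)
      = 0 := by
  rw [← Finset.sum_pair hab (f := fun j => detRowPair hab (mixRows p M N) (M j) (N j)),
    ← sum_isAlt_rows_eq_zero h (detRowPair_isAlt hab (mixRows p M N))]
  refine Finset.sum_subset (Finset.subset_univ _) fun j _ hj => ?_
  obtain ⟨hja, hjb⟩ : j ≠ a ∧ j ≠ b := by simpa using hj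
  by_cases hp : p j
  · simpa only [mixRows_of_pos hp] using detRowPair_row_left hab (mixRows p M N) hja hjb (N j)
  · simpa only [mixRows_of_neg hp] using detRowPair_row_right hab (mixRows p M N) hja hjb (M j)

end Alternating

section EdgeMatrix

variable {n R : Type*} [DecidableEq n] {a b : n}

/-- The symmetric matrix `E_ab + E_ba`, the adjacency matrix of the single edge `ab`. -/
def edgeMatrix (R : Type*) [NonAssocSemiring R] (a b : n) : Matrix n n R :=
  Matrix.single a b 1 + Matrix.single b a 1

section NonAssocSemiring

variable [NonAssocSemiring R]

theorem edgeMatrix_comm (a b : n) : edgeMatrix R a b = edgeMatrix R b a :=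
  add_comm _ _

theorem edgeMatrix_isSymm (a b : n) : (edgeMatrix R a b).IsSymm := by
  simp [edgeMatrix, Matrix.IsSymm, Matrix.transpose_single, add_comm]

variable [Fintype n]

theorem add_edgeMatrix_mul_apply_left (hab : a ≠ b) (M N : Matrix n n R) :
    (M + edgeMatrix R a b * N) a = M a + N b := by
  ext j
  simp [edgeMatrix, add_mul, hab]

theorem add_edgeMatrix_mul_apply_right (hab : a ≠ b) (M N : Matrix n n R) :
    (M + edgeMatrix R a b * N) b = M b + N a := by
  rw [edgeMatrix_comm, add_edgeMatrix_mul_apply_left hab.symm]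

theorem add_edgeMatrix_mul_apply_of_ne {i : n} (hia : i ≠ a) (hib : i ≠ b) (M N : Matrix n n R) :
    (M + edgeMatrix R a b * N) i = M i := by
  ext j
  simp [edgeMatrix, add_mul, hia, hib]

end NonAssocSemiring

variable [Fintype n] [CommRing R]

theorem detRowPair_mixRows_add_edgeMatrix_mul (hab : a ≠ b) (p : n → Prop) [DecidablePred p]
    (M N : Matrix n n R) :
    detRowPair hab (mixRows p M N) (mixRows p (M + edgeMatrix R a b * N) N a)
        (mixRows p (M + edgeMatrix R a b * N) N b)
      = (mixRows p (M + edgeMatrix R a b * N) N).det := by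
  refine detRowPair_eq_det hab fun i hia hib => ?_
  by_cases hp : p i
  · simp only [mixRows_of_pos hp, add_edgeMatrix_mul_apply_of_ne hia hib]
  · simp only [mixRows_of_neg hp]

theorem det_mixRows_add_edgeMatrix_mul_of_not_and (hab : a ≠ b) {p : n → Prop} [DecidablePred p]
    (hp : ¬(p a ∧ p b)) (M N : Matrix n n R) :
    (mixRows p (M + edgeMatrix R a b * N) N).det = (mixRows p M N).det := by
  rw [← detRowPair_mixRows_add_edgeMatrix_mul hab,
    ← detRowPair_eq_det hab (K := mixRows p M N) fun _ _ _ => rfl]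
  by_cases ha : p a
  · have hb : ¬p b := fun hb => hp ⟨ha, hb⟩
    simp only [mixRows_of_pos ha, mixRows_of_neg hb, add_edgeMatrix_mul_apply_left hab, map_add,
      LinearMap.add_apply, (detRowPair_isAlt hab _).self_eq_zero, add_zero]
  · by_cases hb : p b
    · simp only [mixRows_of_neg ha, mixRows_of_pos hb, add_edgeMatrix_mul_apply_right hab, map_add,
        (detRowPair_isAlt hab _).self_eq_zero, add_zero]
    · simp only [mixRows_of_neg ha, mixRows_of_neg hb]

theorem det_mixRows_add_edgeMatrix_mul [CharP R 2] (hab : a ≠ b) {M N : Matrix n n R}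
    (h : (Mᵀ * N).IsSymm) {p q : n → Prop} [DecidablePred p] [DecidablePred q] (ha : p a)
    (hb : p b) (hq : ∀ i, q i ↔ p i ∧ i ≠ a ∧ i ≠ b) :
    (mixRows p (M + edgeMatrix R a b * N) N).det
      = (mixRows p M N).det + (mixRows q M N).det := by
  set ω := detRowPair hab (mixRows p M N)
  have det_shear : ω (M a + N b) (M b + N a) = (mixRows p (M + edgeMatrix R a b * N) N).det := by
    rw [← detRowPair_mixRows_add_edgeMatrix_mul hab, mixRows_of_pos ha, mixRows_of_pos hb,
      add_edgeMatrix_mul_apply_left hab, add_edgeMatrix_mul_apply_right hab]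
  have det_p : ω (M a) (M b) = (mixRows p M N).det := by
    rw [← detRowPair_eq_det hab (fun i _ _ => rfl), mixRows_of_pos ha, mixRows_of_pos hb]
  have det_q : ω (N a) (N b) = (mixRows q M N).det := by
    have hqa : ¬q a := fun hqa => ((hq a).1 hqa).2.1 rfl
    have hqb : ¬q b := fun hqb => ((hq b).1 hqb).2.2 rfl
    have hpq (i : n) (hia : i ≠ a) (hib : i ≠ b) : mixRows q M N i = mixRows p M N i := by
      by_cases hp : p i
      · rw [mixRows_of_pos hp, mixRows_of_pos ((hq i).2 ⟨hp, hia, hib⟩)]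
      · rw [mixRows_of_neg hp, mixRows_of_neg fun hqi => hp ((hq i).1 hqi).1]
    rw [← detRowPair_eq_det hab hpq, mixRows_of_neg hqa, mixRows_of_neg hqb]
  have swap (u v : n → R) : ω u v = ω v u := by
    rw [← (detRowPair_isAlt hab _).neg v u, CharTwo.neg_eq]
  have cross : ω (M a) (N a) + ω (N b) (M b) = 0 := by
    rw [swap (N b)]
    exact detRowPair_mixRows_add_eq_zero hab h p
  calc (mixRows p (M + edgeMatrix R a b * N) N).det
      = ω (M a) (M b) + ω (N b) (N a) + (ω (M a) (N a) + ω (N b) (M b)) := by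
        rw [← det_shear]
        simp only [map_add, LinearMap.add_apply]
        ring
    _ = (mixRows p M N).det + (mixRows q M N).det := by
        rw [cross, add_zero, swap (N b), det_p, det_q]

end EdgeMatrix

section SetSystem

variable {E U T : Finset α} {Φ : Set (Finset α)} {a b : α}

theorem mem_twist : U ∈ twist Φ T ↔ U ∆ T ∈ Φ := by
  constructor
  · rintro ⟨φ, hφ, rfl⟩
    rwa [symmDiff_symmDiff_cancel_right]
  · exact fun h => ⟨U ∆ T, h, (symmDiff_symmDiff_cancel_right T U).symm⟩

theorem symmDiff_subset_iff_left (hT : T ⊆ E) : U ∆ T ⊆ E ↔ U ⊆ E := by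
  have subset_of_subset {V : Finset α} (hV : V ⊆ E) : V ∆ T ⊆ E :=
    Finset.symmDiff_subset_union.trans (Finset.union_subset hV hT)
  exact ⟨fun h => by simpa using subset_of_subset h, subset_of_subset⟩

theorem mem_firstMove (hab : a ≠ b) (hΦ : ∀ φ ∈ Φ, φ ⊆ E) :
    U ∈ firstMove E Φ a b ↔ Xor (U ∈ Φ) ((a ∈ U ∧ b ∈ U) ∧ U \ {a, b} ∈ Φ) := by
  have slide_part : (∃ φ ⊆ E \ {a, b}, φ ∪ {b} ∈ twist Φ {b} ∧ U ∆ {b} = φ ∪ {a}) ↔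
      (a ∈ U ∧ b ∈ U) ∧ U \ {a, b} ∈ Φ := by
    constructor
    · rintro ⟨φ, hφ, hφb, hU⟩
      obtain rfl : U = φ ∪ {a, b} := by
        rw [← symmDiff_symmDiff_cancel_right {b} U, hU]
        grind [Finset.mem_symmDiff]
      have hφ_eq : (φ ∪ {a, b}) \ {a, b} = (φ ∪ {b}) ∆ {b} := by grind [Finset.mem_symmDiff]
      exact ⟨by simp, hφ_eq ▸ mem_twist.1 hφb⟩
    · rintro ⟨⟨haU, hbU⟩, hUΦ⟩
      have hφ_eq : (U \ {a, b} ∪ {b}) ∆ {b} = U \ {a, b} := by grind [Finset.mem_symmDiff]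
      refine ⟨U \ {a, b}, ?_, mem_twist.2 (by rwa [hφ_eq]), by grind [Finset.mem_symmDiff]⟩
      exact Finset.subset_sdiff.2 ⟨hΦ _ hUΦ, Finset.sdiff_disjoint⟩
  rw [firstMove, mem_twist, slideSet, Set.mem_symmDiff, mem_twist, symmDiff_symmDiff_cancel_right,
    Set.mem_ofPred_eq, slide_part]
  rfl

theorem firstMove_nonempty (hab : a ≠ b) (hΦ : ∀ φ ∈ Φ, φ ⊆ E) (hne : Φ.Nonempty) :
    (firstMove E Φ a b).Nonempty := by
  obtain ⟨U, hU⟩ := hne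
  by_cases h : (a ∈ U ∧ b ∈ U) ∧ U \ {a, b} ∈ Φ
  · exact ⟨U \ {a, b}, (mem_firstMove hab hΦ).2 (Or.inl ⟨h.2, by simp⟩)⟩
  · exact ⟨U, (mem_firstMove hab hΦ).2 (Or.inl ⟨hU, h⟩)⟩

end SetSystem

section Representation

variable {E U T : Finset α} {Φ : Set (Finset α)} {M N : Matrix E E (ZMod 2)}

/-- The set system `Φ` on `E` is represented by the subspace of `F₂^E ⊕ F₂^E` spanned by the columns
of `M` stacked over `N`. Symmetry of `MᵀN` says that the subspace is isotropic for the standard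
symplectic form; it is Lagrangian as soon as `Φ` is nonempty. -/
structure IsIsotropicRepr (M N : Matrix E E (ZMod 2)) (Φ : Set (Finset α)) : Prop where
  isSymm : (Mᵀ * N).IsSymm
  mem_iff : ∀ U, U ∈ Φ ↔ U ⊆ E ∧ (mixRows (fun i : E => (i : α) ∈ U) M N).det ≠ 0

namespace IsIsotropicRepr

theorem subset (h : IsIsotropicRepr M N Φ) (hU : U ∈ Φ) : U ⊆ E :=
  ((h.mem_iff U).1 hU).1

theorem twist (h : IsIsotropicRepr M N Φ) (hT : T ⊆ E) :
    IsIsotropicRepr (mixRows (fun i : E => (i : α) ∈ T) N M)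
      (mixRows (fun i : E => (i : α) ∈ T) M N) (twist Φ T) where
  isSymm := isSymm_mixRows_transpose_mul h.isSymm _
  mem_iff U := by
    rw [mem_twist, h.mem_iff, symmDiff_subset_iff_left hT,
      mixRows_mixRows (fun i => Finset.mem_symmDiff)]

theorem mul_right (h : IsIsotropicRepr M N Φ) {P : Matrix E E (ZMod 2)} (hP : P.det ≠ 0) :
    IsIsotropicRepr (M * P) (N * P) Φ where
  isSymm := isSymm_mul_transpose_mul_mul h.isSymm P
  mem_iff U := by
    rw [h.mem_iff, mixRows_mul, Matrix.det_mul, mul_ne_zero_iff_right hP]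

theorem firstMove {a b : α} (h : IsIsotropicRepr M N Φ) (ha : a ∈ E) (hb : b ∈ E) (hab : a ≠ b) :
    IsIsotropicRepr (M + edgeMatrix (ZMod 2) ⟨a, ha⟩ ⟨b, hb⟩ * N) N (firstMove E Φ a b) where
  isSymm := isSymm_add_mul_transpose_mul h.isSymm (edgeMatrix_isSymm _ _)
  mem_iff U := by
    have hab' : (⟨a, ha⟩ : E) ≠ ⟨b, hb⟩ := fun h => hab (congrArg Subtype.val h)
    rw [mem_firstMove hab fun _ => h.subset]
    by_cases hU : a ∈ U ∧ b ∈ U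
    · have hsub : U \ {a, b} ⊆ E ↔ U ⊆ E := by
        grind
      have add_ne_zero_iff (x y : ZMod 2) : x + y ≠ 0 ↔ Xor (x ≠ 0) (y ≠ 0) := by
        revert x y
        decide
      have hdiff (i : E) : (i : α) ∈ U \ {a, b} ↔
          (i : α) ∈ U ∧ i ≠ ⟨a, ha⟩ ∧ i ≠ ⟨b, hb⟩ := by
        simp [Subtype.ext_iff]
      rw [det_mixRows_add_edgeMatrix_mul hab' h.isSymm hU.1 hU.2 hdiff, add_ne_zero_iff,
        h.mem_iff, h.mem_iff, hsub, and_iff_right hU]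
      by_cases hUE : U ⊆ E <;> simp [hUE, Xor]
    · rw [det_mixRows_add_edgeMatrix_mul_of_not_and hab' hU, ← h.mem_iff]
      simp [hU, Xor]

end IsIsotropicRepr

theorem det_principalSubmatrix (A : Matrix α α (ZMod 2)) (hU : U ⊆ E) :
    (principalSubmatrix A U).det =
      (mixRows (fun i : E => (i : α) ∈ U) (A.submatrix (↑) (↑)) 1).det := by
  rw [det_mixRows_one,
    ← Matrix.det_submatrix_equiv_self (Equiv.subtypeSubtypeEquivSubtype @hU).symm]
  rfl

theorem IsIsotropicRepr.of_isSymm {A : Matrix α α (ZMod 2)} (hA : A.IsSymm) :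
    IsIsotropicRepr (E := E) (A.submatrix (↑) (↑)) 1 {U | U ⊆ E ∧ Nondeg A U} where
  isSymm := by simpa using (hA.submatrix _).transpose
  mem_iff U := and_congr_right fun hU => by
    rw [Nondeg, isUnit_iff_ne_zero, det_principalSubmatrix A hU]

theorem exists_isSymm_submatrix_eq {m n R : Type*} [Zero R] {f : n → m} (hf : f.Injective)
    {B : Matrix n n R} (hB : B.IsSymm) : ∃ A : Matrix m m R, A.IsSymm ∧ A.submatrix f f = B := by
  have hff : (Prod.map f f).Injective := hf.prodMap hf
  let A : Matrix m m R := Matrix.of fun x y => Function.extend (Prod.map f f) B.uncurry 0 (x, y)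
  have hAB (i j : n) : A (f i) (f j) = B i j := hff.extend_apply _ _ (i, j)
  have hA_zero {x y : m} (h : ¬(x ∈ Set.range f ∧ y ∈ Set.range f)) : A x y = 0 :=
    Function.extend_apply' _ _ _ fun ⟨_, hij⟩ =>
      h ⟨⟨_, congrArg Prod.fst hij⟩, ⟨_, congrArg Prod.snd hij⟩⟩
  refine ⟨A, Matrix.IsSymm.ext fun x y => ?_, Matrix.ext hAB⟩
  by_cases h : x ∈ Set.range f ∧ y ∈ Set.range f
  · obtain ⟨⟨i, rfl⟩, ⟨j, rfl⟩⟩ := h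
    rw [hAB, hAB, hB.apply]
  · rw [hA_zero h, hA_zero (mt And.symm h)]

theorem IsIsotropicRepr.exists_one (h : IsIsotropicRepr M N Φ) (hΦ : ∅ ∈ Φ) :
    ∃ B : Matrix E E (ZMod 2), IsIsotropicRepr B 1 Φ := by
  have hN : N.det ≠ 0 := by
    have hN_eq : mixRows (fun i : E => (i : α) ∈ (∅ : Finset α)) M N = N := by
      ext i
      simp [mixRows]
    simpa only [hN_eq] using ((h.mem_iff ∅).1 hΦ).2
  have hN_unit : IsUnit N.det := isUnit_iff_ne_zero.2 hN
  refine ⟨M * N⁻¹, ?_⟩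
  rw [← Matrix.mul_nonsing_inv N hN_unit]
  exact h.mul_right (Matrix.isUnit_nonsing_inv_det N hN_unit).ne_zero

theorem isBinaryDeltaMatroid_iff :
    IsBinaryDeltaMatroid E Φ ↔
      Φ.Nonempty ∧ ∃ M N : Matrix E E (ZMod 2), IsIsotropicRepr M N Φ := by
  constructor
  · rintro ⟨A, T, hA, hT, rfl⟩
    have htwist : {ψ | ∃ U : Finset α, U ⊆ E ∧ Nondeg A U ∧ ψ = U ∆ T} =
        twist {U | U ⊆ E ∧ Nondeg A U} T := by
      ext
      simp [twist, and_assoc]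
    refine ⟨⟨∅ ∆ T, ∅, Finset.empty_subset E, by simp [Nondeg], rfl⟩, ?_⟩
    rw [htwist]
    exact ⟨_, _, (IsIsotropicRepr.of_isSymm hA).twist hT⟩
  · rintro ⟨⟨F, hF⟩, M, N, h⟩
    have hFE : F ⊆ E := h.subset hF
    have hempty : ∅ ∈ twist Φ F := mem_twist.2 (by rwa [← Finset.bot_eq_empty, bot_symmDiff])
    obtain ⟨B, hB⟩ := (h.twist hFE).exists_one hempty
    obtain ⟨A, hA, rfl⟩ :=
      exists_isSymm_submatrix_eq Subtype.val_injective (by simpa using hB.isSymm.transpose)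
    have mem_iff (V : Finset α) : V ∆ F ∈ Φ ↔ V ⊆ E ∧ Nondeg A V := by
      rw [← mem_twist, hB.mem_iff, ← (IsIsotropicRepr.of_isSymm hA).mem_iff]
      rfl
    refine ⟨A, F, hA, hFE, Set.ext fun U => ⟨fun hU => ?_, ?_⟩⟩
    · have hUF : U ∆ F ∆ F = U := symmDiff_symmDiff_cancel_right F U
      obtain ⟨hsub, hnondeg⟩ := (mem_iff (U ∆ F)).1 (by rwa [hUF])
      exact ⟨U ∆ F, hsub, hnondeg, hUF.symm⟩
    · rintro ⟨V, hV, hnondeg, rfl⟩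
      exact (mem_iff V).2 ⟨hV, hnondeg⟩

end Representation

/-- The first Vassiliev move `D\'_{ab} = ((D * {b})~_{ab}) * {b}` of a
binary delta-matroid at a pair of distinct elements `a, b` of its ground set is a binary
delta-matroid. -/
theorem firstMove_isBinaryDeltaMatroid {α : Type*} [DecidableEq α] (E : Finset α)
    (Φ : Set (Finset α)) (a b : α) (ha : a ∈ E) (hb : b ∈ E) (hab : a ≠ b)
    (hD : IsBinaryDeltaMatroid E Φ) :
    IsBinaryDeltaMatroid E (firstMove E Φ a b) := by
  obtain ⟨hne, M, N, h⟩ := isBinaryDeltaMatroid_iff.1 hD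
  exact isBinaryDeltaMatroid_iff.2
    ⟨firstMove_nonempty hab (fun _ => h.subset) hne, _, _, h.firstMove ha hb hab⟩
end

section
/- For any set system D = (E; Φ) and any two distinct elements a, b ∈ E, the first Vassiliev move is symmetric in a and b: D'_{ab} = D'_{ba}. -/
open scoped symmDiff

variable {α : Type*} [DecidableEq α]

/-! Twisting commutes with symmetric differences of set systems, so the two twists by `{b}` cancel
except on the sets toggled by the slide. These become the sets `φ ∪ {a, b}` with `φ` feasible and
`φ ⊆ E \ {a, b}`, a description in which `a` and `b` play the same role. -/

section Twist

variable (Φ Ψ : Set (Finset α)) (T : Finset α)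

theorem twist_eq_image : twist Φ T = (· ∆ T) '' Φ := by
  ext ψ
  simp only [twist, Set.mem_ofPred_eq, Set.mem_image, eq_comm]

theorem twist_twist_self : twist (twist Φ T) T = Φ := by
  simp only [twist_eq_image, Set.image_image, symmDiff_symmDiff_cancel_right, Set.image_id']

theorem twist_symmDiff : twist (Φ ∆ Ψ) T = twist Φ T ∆ twist Ψ T := by
  simp only [twist_eq_image, Set.image_symmDiff (symmDiff_left_injective T)]

theorem union_mem_twist_iff {Φ : Set (Finset α)} {T φ : Finset α} (h : Disjoint φ T) :
    φ ∪ T ∈ twist Φ T ↔ φ ∈ Φ := by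
  rw [← Finset.sup_eq_union, ← h.symmDiff_eq_sup, twist_eq_image]
  exact (symmDiff_left_injective T).mem_set_image

end Twist

theorem slideSet_eq_symmDiff_image (E : Finset α) (Φ : Set (Finset α)) (a b : α) :
    slideSet E Φ a b = Φ ∆ ((· ∪ {a}) '' {φ | φ ⊆ E \ {a, b} ∧ φ ∪ {b} ∈ Φ}) := by
  simp only [slideSet, Set.image, Set.mem_ofPred_eq, and_assoc, eq_comm]

theorem firstMove_eq_symmDiff_image (E : Finset α) (Φ : Set (Finset α)) {a b : α} (hab : a ≠ b) :
    firstMove E Φ a b = Φ ∆ ((· ∪ {a, b}) '' {φ ∈ Φ | φ ⊆ E \ {a, b}}) := by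
  have disjoint_b {φ : Finset α} (hφ : φ ⊆ E \ {a, b}) : Disjoint φ {b} :=
    Finset.disjoint_of_subset_left hφ (by simp)
  have domain_eq :
      {φ | φ ⊆ E \ {a, b} ∧ φ ∪ {b} ∈ twist Φ {b}} = {φ ∈ Φ | φ ⊆ E \ {a, b}} := by
    ext φ
    rw [Set.mem_ofPred_eq, Set.mem_ofPred_eq, and_comm]
    exact and_congr_left fun hφ => union_mem_twist_iff (disjoint_b hφ)
  have symmDiff_eq_union {φ : Finset α} (hφ : φ ⊆ E \ {a, b}) :
      (φ ∪ {a}) ∆ {b} = φ ∪ {a, b} := by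
    have h : Disjoint (φ ∪ {a}) {b} :=
      Finset.disjoint_union_left.2 ⟨disjoint_b hφ, Finset.disjoint_singleton.2 hab⟩
    rw [h.symmDiff_eq_sup, Finset.sup_eq_union, Finset.union_assoc, ← Finset.insert_eq]
  calc firstMove E Φ a b
      = twist (twist Φ {b}) {b} ∆
          twist ((· ∪ {a}) '' {φ | φ ⊆ E \ {a, b} ∧ φ ∪ {b} ∈ twist Φ {b}}) {b} := by
        rw [firstMove, slideSet_eq_symmDiff_image, twist_symmDiff]
    _ = Φ ∆ ((fun φ => (φ ∪ {a}) ∆ {b}) '' {φ ∈ Φ | φ ⊆ E \ {a, b}}) := by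
        rw [twist_twist_self, domain_eq, twist_eq_image, Set.image_image]
    _ = Φ ∆ ((· ∪ {a, b}) '' {φ ∈ Φ | φ ⊆ E \ {a, b}}) := by
        rw [Set.image_congr fun φ hφ => symmDiff_eq_union hφ.2]

/-- The first Vassiliev move is symmetric in `a` and `b`:
`D\'_{ab} = D\'_{ba}`. -/
theorem firstMove_symm {α : Type*} [DecidableEq α] (E : Finset α)
    (Φ : Set (Finset α)) (a b : α) (hne : Φ.Nonempty) (hsub : ∀ φ ∈ Φ, φ ⊆ E)
    (ha : a ∈ E) (hb : b ∈ E) (hab : a ≠ b) :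
    firstMove E Φ a b = firstMove E Φ b a := by
  rw [firstMove_eq_symmDiff_image E Φ hab, firstMove_eq_symmDiff_image E Φ hab.symm,
    Finset.pair_comm b a]
end

section
/- The set system D = ({1,2,3}; {∅, {1,2}, {1,3}, {2,3}, {1,2,3}}) is a delta-matroid, but its handle slide D̃_{12} = ({1,2,3}; {∅, {1,2}, {2,3}, {1,2,3}}) is not a delta-matroid (the Symmetric Exchange Axiom fails). Hence the handle slide does not preserve the class of delta-matroids in general. -/
open scoped symmDiff

variable {α : Type*} [DecidableEq α]

/-!
A set system in which no two infeasible sets differ in exactly one element is a delta-matroid: if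
`φ₁ ∆ {e}` is infeasible, it differs from the feasible set `φ₂` in some element `e'`, and toggling
`e'` as well makes it feasible. For `k ≠ 0` this applies to `{φ ⊆ E | #φ ≠ k}`, since toggling an
element changes the cardinality.

Replacing `b` by `a` preserves the cardinality, so the handle slide of `a` over `b` removes from
this system exactly the sets that contain `a` but not `b`. The exchange axiom then fails for a set
`φ` of size `k + 2` containing `a` and `b`, the set `∅` and the element `b`: removing `b` and `a`
from `φ` leaves a set of size `k`, and any other choice leaves `a` without `b`. The case `k = 1`,
`E = {1, 2, 3}` is the counterexample.
-/

namespace IsDeltaMatroid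

variable {E : Finset α} {Φ : Set (Finset α)}

theorem of_infeasible_symmDiff_singleton_mem (hne : Φ.Nonempty) (hE : ∀ φ ∈ Φ, φ ⊆ E)
    (h : ∀ ψ ⊆ E, ψ ∉ Φ → ∀ e ∈ E, ψ ∆ {e} ∈ Φ) : IsDeltaMatroid E Φ := by
  refine ⟨hne, hE, fun φ₁ h₁ φ₂ h₂ e he => ?_⟩
  have hsub : φ₁ ∆ φ₂ ⊆ E := symmDiff_le_sup.trans (Finset.union_subset (hE φ₁ h₁) (hE φ₂ h₂))
  by_cases hψ : φ₁ ∆ {e} ∈ Φ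
  · exact ⟨e, he, by simpa using hψ⟩
  · obtain ⟨e', he'⟩ : (φ₁ ∆ {e} ∆ φ₂).Nonempty :=
      Finset.symmDiff_nonempty.mpr fun heq => hψ (heq ▸ h₂)
    have hmem : e' ∈ φ₁ ∆ φ₂ := by grind [Finset.mem_symmDiff]
    have hψE : φ₁ ∆ {e} ⊆ E := by grind [Finset.mem_symmDiff]
    have htoggle : φ₁ ∆ {e, e'} = φ₁ ∆ {e} ∆ {e'} := by grind [Finset.mem_symmDiff]
    exact ⟨e', hmem, htoggle ▸ h _ hψE hψ e' (hsub hmem)⟩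

theorem exists_sdiff_pair_mem {φ : Finset α} {e : α} (hΦ : IsDeltaMatroid E Φ) (hempty : ∅ ∈ Φ)
    (hφ : φ ∈ Φ) (he : e ∈ φ) : ∃ e' ∈ φ, φ \ {e, e'} ∈ Φ := by
  obtain ⟨e', he', hmem⟩ := hΦ.2.2 φ hφ ∅ hempty e (by simpa [Finset.mem_symmDiff] using he)
  have he'φ : e' ∈ φ := by simpa [Finset.mem_symmDiff] using he'
  have hpair : {e, e'} ⊆ φ := by grind
  exact ⟨e', he'φ, symmDiff_of_ge hpair ▸ hmem⟩

end IsDeltaMatroid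

theorem card_symmDiff_singleton_ne (s : Finset α) (e : α) : (s ∆ {e}).card ≠ s.card := by
  by_cases he : e ∈ s
  · have : s ∆ {e} = s.erase e := by grind [Finset.mem_symmDiff]
    grind
  · have : s ∆ {e} = insert e s := by grind [Finset.mem_symmDiff]
    grind

theorem isDeltaMatroid_setOf_card_ne (E : Finset α) {k : ℕ} (hk : k ≠ 0) :
    IsDeltaMatroid E {φ | φ ⊆ E ∧ φ.card ≠ k} := by
  refine .of_infeasible_symmDiff_singleton_mem ⟨∅, by simpa using hk.symm⟩ (fun φ hφ => hφ.1) ?_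
  intro ψ hψE hψ e he
  obtain rfl : ψ.card = k := by simpa [hψE] using hψ
  exact ⟨by grind [Finset.mem_symmDiff], card_symmDiff_singleton_ne ψ e⟩

section HandleSlide

variable {E : Finset α} {a b : α}

theorem mem_slideSet_iff {Φ : Set (Finset α)} {ψ : Finset α} (ha : a ∈ E) (hab : a ≠ b) :
    ψ ∈ slideSet E Φ a b ↔
      Xor (ψ ∈ Φ) (ψ ⊆ E ∧ a ∈ ψ ∧ b ∉ ψ ∧ insert b (ψ.erase a) ∈ Φ) := by
  have hslid : (∃ φ ⊆ E \ {a, b}, φ ∪ {b} ∈ Φ ∧ ψ = φ ∪ {a}) ↔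
      ψ ⊆ E ∧ a ∈ ψ ∧ b ∉ ψ ∧ insert b (ψ.erase a) ∈ Φ := by
    constructor
    · rintro ⟨φ, hφE, hφ, rfl⟩
      have hswap : insert b ((φ ∪ {a}).erase a) = φ ∪ {b} := by grind
      exact ⟨by grind, by grind, by grind, hswap ▸ hφ⟩
    · rintro ⟨hψE, haψ, hbψ, hψ⟩
      have hswap : ψ.erase a ∪ {b} = insert b (ψ.erase a) := by grind
      exact ⟨ψ.erase a, by grind, hswap ▸ hψ, by grind⟩
  rw [← hslid]
  rfl

theorem slideSet_setOf_card (ha : a ∈ E) (hb : b ∈ E) (hab : a ≠ b) (p : ℕ → Prop) :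
    slideSet E {φ | φ ⊆ E ∧ p φ.card} a b = {φ | φ ⊆ E ∧ p φ.card ∧ (a ∈ φ → b ∈ φ)} := by
  ext ψ
  have hcard (haψ : a ∈ ψ) (hbψ : b ∉ ψ) : (insert b (ψ.erase a)).card = ψ.card := by grind
  have hsub (hψE : ψ ⊆ E) : insert b (ψ.erase a) ⊆ E := by grind
  rw [mem_slideSet_iff ha hab]
  simp only [Set.mem_ofPred_eq, Xor]
  grind

theorem not_isDeltaMatroid_setOf_card_ne_imp (ha : a ∈ E) (hb : b ∈ E) (hab : a ≠ b) {k : ℕ}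
    (hk : k ≠ 0) (hE : k + 2 ≤ E.card) :
    ¬ IsDeltaMatroid E {φ | φ ⊆ E ∧ φ.card ≠ k ∧ (a ∈ φ → b ∈ φ)} := by
  intro hΦ
  obtain ⟨φ, habφ, hφE, hφ⟩ : ∃ φ, {a, b} ⊆ φ ∧ φ ⊆ E ∧ φ.card = k + 2 :=
    Finset.exists_subsuperset_card_eq (by grind) (by grind) hE
  obtain ⟨e, -, -, hcard, himp⟩ := hΦ.exists_sdiff_pair_mem (φ := φ) (e := b)
    (by simpa using hk.symm) ⟨hφE, by grind, by grind⟩ (by grind)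
  have hea : e = a := by
    by_contra hea
    have hb_mem : b ∈ φ \ {b, e} := himp (by grind)
    grind
  refine hcard ?_
  rw [hea, Finset.card_sdiff_of_subset (by grind), Finset.card_pair hab.symm, hφ]
  rfl

end HandleSlide

theorem handleSlide_not_deltaMatroid_general {E : Finset α} {a b : α} (ha : a ∈ E) (hb : b ∈ E)
    (hab : a ≠ b) {k : ℕ} (hk : k ≠ 0) (hE : k + 2 ≤ E.card) :
    IsDeltaMatroid E {φ | φ ⊆ E ∧ φ.card ≠ k} ∧
    slideSet E {φ | φ ⊆ E ∧ φ.card ≠ k} a b = {φ | φ ⊆ E ∧ φ.card ≠ k ∧ (a ∈ φ → b ∈ φ)} ∧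
    ¬ IsDeltaMatroid E {φ | φ ⊆ E ∧ φ.card ≠ k ∧ (a ∈ φ → b ∈ φ)} :=
  ⟨isDeltaMatroid_setOf_card_ne E hk, slideSet_setOf_card ha hb hab (· ≠ k),
    not_isDeltaMatroid_setOf_card_ne_imp ha hb hab hk hE⟩

theorem setOf_subset_triple_card_ne_one {a b c : α} (hab : a ≠ b) (hac : a ≠ c) (hbc : b ≠ c) :
    {φ : Finset α | φ ⊆ {a, b, c} ∧ φ.card ≠ 1} = {∅, {a, b}, {a, c}, {b, c}, {a, b, c}} := by
  ext φ
  simp only [Set.mem_ofPred_eq, Set.mem_insert_iff, Set.mem_singleton_iff]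
  constructor
  · rintro ⟨hφ, hcard⟩
    have hcases : φ = ∅ ∨ φ = {a} ∨ φ = {b} ∨ φ = {c} ∨
        φ = {a, b} ∨ φ = {a, c} ∨ φ = {b, c} ∨ φ = {a, b, c} := by
      have hpow : φ ∈ Finset.powerset {a, b, c} := Finset.mem_powerset.mpr hφ
      simp only [Finset.powerset_insert, Finset.mem_union, Finset.mem_image, Finset.mem_powerset,
        Finset.subset_singleton_iff] at hpow
      grind
    grind
  · grind

theorem setOf_subset_triple_card_ne_one_imp {a b c : α} (hab : a ≠ b) (hac : a ≠ c) (hbc : b ≠ c) :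
    {φ : Finset α | φ ⊆ {a, b, c} ∧ φ.card ≠ 1 ∧ (a ∈ φ → b ∈ φ)} =
      {∅, {a, b}, {b, c}, {a, b, c}} := by
  ext φ
  have hφ := Set.ext_iff.mp (setOf_subset_triple_card_ne_one hab hac hbc) φ
  simp only [Set.mem_ofPred_eq, Set.mem_insert_iff, Set.mem_singleton_iff] at hφ ⊢
  rw [← and_assoc, hφ]
  grind

/-- The set system `D = ({1,2,3}; {∅, {1,2}, {1,3}, {2,3}, {1,2,3}})`
is a delta-matroid, its handle slide `D~_{12}` is `({1,2,3}; {∅, {1,2}, {2,3}, {1,2,3}})`,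
and the latter is not a delta-matroid: handle slides do not preserve delta-matroids. -/
theorem handleSlide_not_deltaMatroid :
    IsDeltaMatroid ({1, 2, 3} : Finset ℕ)
      ({∅, {1, 2}, {1, 3}, {2, 3}, {1, 2, 3}} : Set (Finset ℕ)) ∧
    slideSet ({1, 2, 3} : Finset ℕ)
        ({∅, {1, 2}, {1, 3}, {2, 3}, {1, 2, 3}} : Set (Finset ℕ)) 1 2
      = ({∅, {1, 2}, {2, 3}, {1, 2, 3}} : Set (Finset ℕ)) ∧
    ¬ IsDeltaMatroid ({1, 2, 3} : Finset ℕ)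
      ({∅, {1, 2}, {2, 3}, {1, 2, 3}} : Set (Finset ℕ)) := by
  rw [← setOf_subset_triple_card_ne_one (by decide) (by decide) (by decide),
    ← setOf_subset_triple_card_ne_one_imp (by decide) (by decide) (by decide)]
  exact handleSlide_not_deltaMatroid_general (by decide) (by decide) (by decide) one_ne_zero le_rfl
end
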